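/- arXiv:2603.27248 — 5 statements merged into one kernel-verified Lean document; each statement's English description precedes it below -/
import Mathlib

section
/- Let r ≥ 1 be an integer, let L_1 > L_2 > ... > L_r > 0 be integers, let m_1, ..., m_r ≥ 1 be integers, and set n = Σ_{i=1}^r m_i·L_i. Define the gaps g_i := L_i − L_{i+1} for 1 ≤ i < r and g_r := L_r, and set A := #{i ∈ {1,...,r} : g_i > 1} and B := #{i ∈ {1,...,r} : m_i > 1}. Then A + B ≤ n − T_r, where T_r = r(r+1)/2. -/
/-!
Gaps and multiplicities are at least `1`, so `A ≤ ∑ (g i - 1)` and `B ≤ ∑ (m i - 1)`. The room for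
these excesses above the staircase `T r` is found row by row. Put `L (r + 1) = 0`. The `r - i` part
sizes smaller than `L i` force `L (i + 1) ≥ r - i`, so
`L i = L (i + 1) + g i ≥ (r + 1 - i) + (g i - 1)`; moreover `m i * L i ≥ L i + (m i - 1)` because
`L i ≥ 1`. Summing over `i` turns the terms `r + 1 - i` into `T r`.
-/

namespace PartitionDegree

/-- The `m`-th triangular number. -/
def T (m : ℕ) : ℕ := m * (m + 1) / 2

/-- The number of distinct part sizes of a partition. -/
def supp {n : ℕ} (lam : n.Partition) : ℕ := lam.parts.toFinset.card

/-- The gap-bonus count: distinct part sizes `L ≥ 2` such that `L - 1` is not a part size. -/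
def gapBonus {n : ℕ} (lam : n.Partition) : ℕ :=
  (lam.parts.toFinset.filter (fun L => 2 ≤ L ∧ (L - 1) ∉ lam.parts)).card

/-- The multiplicity-bonus count: distinct part sizes occurring with multiplicity at least 2. -/
def multBonus {n : ℕ} (lam : n.Partition) : ℕ :=
  (lam.parts.toFinset.filter (fun L => 2 ≤ lam.parts.count L)).card

/-- The degree of a partition in the partition graph. -/
def deg {n : ℕ} (lam : n.Partition) : ℕ :=
  supp lam * (supp lam - 1) + gapBonus lam + multBonus lam

/-- The maximal degree over all partitions of `n`. -/
def maxDeg (n : ℕ) : ℕ := Finset.univ.sup (fun lam : n.Partition => deg lam)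

/-- `ρ(q)`: the maximum of `a + b` over pairs with `T a + T b ≤ q`. -/
noncomputable def rho (q : ℕ) : ℕ := sSup {c : ℕ | ∃ a b : ℕ, c = a + b ∧ T a + T b ≤ q}

/-- `mu` is the conjugate of `lam`: for each `k ≥ 1`, the multiplicity of `k` in `mu`
equals (number of parts of `lam` that are `≥ k`) minus (number of parts `≥ k + 1`). -/
def IsConjugate {n : ℕ} (lam mu : n.Partition) : Prop :=
  ∀ k : ℕ, 1 ≤ k →
    mu.parts.count k =
      Multiset.countP (fun p => k ≤ p) lam.parts -
        Multiset.countP (fun p => k + 1 ≤ p) lam.parts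

theorem sum_Icc_add_one_sub (r : ℕ) : ∑ i ∈ Finset.Icc 1 r, (r + 1 - i) = T r := by
  calc ∑ i ∈ Finset.Icc 1 r, (r + 1 - i)
      = ∑ i ∈ Finset.Ico 1 (r + 1), (r + 1 - i) := by rw [Finset.Ico_add_one_right_eq_Icc]
    _ = ∑ i ∈ Finset.Ico 1 (r + 1), i := by
        simpa using Finset.sum_Ico_reflect (fun i => i) 1 (Nat.le_succ (r + 1))
    _ = ∑ i ∈ Finset.range (r + 1), i := by
        rw [Finset.range_eq_Ico, Finset.sum_eq_sum_Ico_succ_bot r.succ_pos, zero_add]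
    _ = T r := by rw [Finset.sum_range_id, Nat.add_sub_cancel, mul_comm, T]

theorem card_filter_one_lt_add_card_le_sum {ι : Type*} {s : Finset ι} {f : ι → ℕ}
    (hf : ∀ i ∈ s, 1 ≤ f i) : (s.filter (fun i => 1 < f i)).card + s.card ≤ ∑ i ∈ s, f i := by
  rw [Finset.card_filter, Finset.card_eq_sum_ones, ← Finset.sum_add_distrib]
  refine Finset.sum_le_sum fun i hi => ?_
  have := hf i hi
  split_ifs <;> omega

theorem add_sub_le_of_strictAntiOn {f : ℕ → ℕ} {a b : ℕ} (hf : StrictAntiOn f (Set.Icc a b))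
    (hab : a ≤ b) : f b + (b - a) ≤ f a := by
  induction b, hab using Nat.le_induction with
  | base => simp
  | succ b hab ih =>
    have hprev := ih (hf.mono (Set.Icc_subset_Icc_right b.le_succ))
    have hstep : f (b + 1) < f b := hf ⟨hab, b.le_succ⟩ ⟨by omega, le_rfl⟩ b.lt_succ_self
    omega

theorem one_le_gap {r : ℕ} {L g : ℕ → ℕ} (hL : StrictAntiOn L (Set.Icc 1 r)) (hLr : 0 < L r)
    (hg : ∀ i ∈ Finset.Icc 1 (r - 1), g i = L i - L (i + 1)) (hgr : g r = L r) :
    ∀ i ∈ Finset.Icc 1 r, 1 ≤ g i := by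
  intro i hi
  obtain ⟨h1i, hir⟩ := Finset.mem_Icc.1 hi
  rcases hir.eq_or_lt with rfl | hir
  · omega
  · have hdesc : L (i + 1) < L i := hL ⟨h1i, hir.le⟩ ⟨by omega, hir⟩ i.lt_succ_self
    have hgap := hg i (Finset.mem_Icc.2 ⟨h1i, by omega⟩)
    omega

theorem sub_add_gap_le_part {r : ℕ} {L g : ℕ → ℕ} (hL : StrictAntiOn L (Set.Icc 1 r))
    (hLr : 0 < L r) (hg : ∀ i ∈ Finset.Icc 1 (r - 1), g i = L i - L (i + 1)) (hgr : g r = L r) :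
    ∀ i ∈ Finset.Icc 1 r, r - i + g i ≤ L i := by
  intro i hi
  obtain ⟨h1i, hir⟩ := Finset.mem_Icc.1 hi
  rcases hir.eq_or_lt with rfl | hir
  · omega
  · have hdesc : L (i + 1) < L i := hL ⟨h1i, hir.le⟩ ⟨by omega, hir⟩ i.lt_succ_self
    have htail : L r + (r - (i + 1)) ≤ L (i + 1) :=
      add_sub_le_of_strictAntiOn (hL.mono (Set.Icc_subset_Icc_left (by omega))) hir
    have hgap := hg i (Finset.mem_Icc.2 ⟨h1i, by omega⟩)
    omega

theorem T_add_sum_gap_add_sum_mult_le {r : ℕ} {L m g : ℕ → ℕ}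
    (hm : ∀ i ∈ Finset.Icc 1 r, 1 ≤ m i) (hg : ∀ i ∈ Finset.Icc 1 r, 1 ≤ g i)
    (hgL : ∀ i ∈ Finset.Icc 1 r, r - i + g i ≤ L i) :
    T r + ∑ i ∈ Finset.Icc 1 r, g i + ∑ i ∈ Finset.Icc 1 r, m i ≤
      ∑ i ∈ Finset.Icc 1 r, m i * L i + 2 * r := by
  have hrow : ∀ i ∈ Finset.Icc 1 r, (r + 1 - i) + g i + m i ≤ m i * L i + 2 := by
    intro i hi
    have hmi := hm i hi
    have hgi := hg i hi
    have hLi := hgL i hi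
    have hmul : m i + L i - 1 ≤ m i * L i := Nat.add_sub_one_le_mul (by omega) (by omega)
    omega
  simpa [Finset.sum_add_distrib, sum_Icc_add_one_sub, mul_comm] using Finset.sum_le_sum hrow

/-- the bonus bound `A + B ≤ n - T r` for a partition in compressed form. -/
theorem bonus_bound (r : ℕ) (hr : 1 ≤ r) (L m : ℕ → ℕ)
    (hL : ∀ i ∈ Finset.Icc 1 r, ∀ j ∈ Finset.Icc 1 r, i < j → L j < L i)
    (hLpos : ∀ i ∈ Finset.Icc 1 r, 0 < L i)
    (hm : ∀ i ∈ Finset.Icc 1 r, 1 ≤ m i)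
    (n : ℕ) (hn : n = ∑ i ∈ Finset.Icc 1 r, m i * L i)
    (g : ℕ → ℕ)
    (hg : ∀ i ∈ Finset.Icc 1 (r - 1), g i = L i - L (i + 1))
    (hgr : g r = L r)
    (A B : ℕ)
    (hA : A = ((Finset.Icc 1 r).filter (fun i => 1 < g i)).card)
    (hB : B = ((Finset.Icc 1 r).filter (fun i => 1 < m i)).card) :
    A + B ≤ n - T r := by
  have hanti : StrictAntiOn L (Set.Icc 1 r) := fun i hi j hj =>
    hL i (Finset.mem_Icc.2 hi) j (Finset.mem_Icc.2 hj)
  have hLr : 0 < L r := hLpos r (Finset.right_mem_Icc.2 hr)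
  have hg1 : ∀ i ∈ Finset.Icc 1 r, 1 ≤ g i := one_le_gap hanti hLr hg hgr
  have hgap := card_filter_one_lt_add_card_le_sum hg1
  have hmult := card_filter_one_lt_add_card_le_sum hm
  have hrows := T_add_sum_gap_add_sum_mult_le hm hg1 (sub_add_gap_le_part hanti hLr hg hgr)
  rw [← hA, Nat.card_Icc] at hgap
  rw [← hB, Nat.card_Icc] at hmult
  rw [← hn] at hrows
  omega

end PartitionDegree
end

section
/- Let n ≥ 1 and let λ be a partition of n with r = supp(λ) distinct part sizes. Then A(λ) = 0 and B(λ) = 0 if and only if λ is the staircase partition δ_r = (r, r−1, ..., 1) (equivalently, n = r(r+1)/2 and the parts of λ are exactly r, r−1, ..., 1, each with multiplicity one). -/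
/-!
The multiplicity bonus vanishes exactly when the parts form a set, and the gap bonus vanishes
exactly when this set `S` of positive integers contains, with each `k + 1 ≥ 2`, also `k`. Descending
from an element `k` of such a set gives `{1, …, k} ⊆ S`, so `k ≤ |S|`; hence `S ⊆ {1, …, |S|}`, and
the two sets coincide because they have the same cardinality.
-/

namespace PartitionDegree

section PredClosed

variable {a : ℕ}

theorem Icc_subset_of_pred_closed {S : Set ℕ} (hS : ∀ k, a ≤ k → k + 1 ∈ S → k ∈ S) {b : ℕ}
    (hb : b ∈ S) : Set.Icc a b ⊆ S := fun _ hj ↦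
  Nat.decreasingInduction' (fun k _ hjk ↦ hS k (hj.1.trans hjk)) hj.2 hb

theorem eq_Ico_add_card_of_pred_closed {S : Finset ℕ} (ha : ∀ k ∈ S, a ≤ k)
    (hS : ∀ k, a ≤ k → k + 1 ∈ S → k ∈ S) : S = Finset.Ico a (a + S.card) := by
  refine Finset.eq_of_subset_of_card_le (fun k hk ↦ ?_) (by simp)
  have hIcc : Finset.Icc a k ⊆ S := by
    simpa [← Finset.coe_subset] using Icc_subset_of_pred_closed (S := S) hS hk
  have hcard : k + 1 - a ≤ S.card := by simpa using Finset.card_le_card hIcc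
  have hak := ha k hk
  exact Finset.mem_Ico.2 ⟨hak, by omega⟩

theorem eq_Ico_add_card_iff {S : Finset ℕ} (ha : ∀ k ∈ S, a ≤ k) :
    S = Finset.Ico a (a + S.card) ↔ ∀ k, a ≤ k → k + 1 ∈ S → k ∈ S := by
  refine ⟨fun h k hak hk ↦ ?_, eq_Ico_add_card_of_pred_closed ha⟩
  rw [h, Finset.mem_Ico] at hk ⊢
  omega

end PredClosed

theorem eq_val_iff_toFinset_eq_and_nodup {α : Type*} [DecidableEq α] {m : Multiset α}
    {s : Finset α} : m = s.val ↔ m.toFinset = s ∧ m.Nodup := by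
  constructor
  · rintro rfl
    exact ⟨s.val_toFinset, s.nodup⟩
  · rintro ⟨rfl, hm⟩
    exact hm.dedup.symm

section Bonus

variable {n : ℕ} {lam : n.Partition}

theorem gapBonus_eq_zero_iff :
    gapBonus lam = 0 ↔ ∀ k, 1 ≤ k → k + 1 ∈ lam.parts → k ∈ lam.parts := by
  simp only [gapBonus, Finset.card_eq_zero, Finset.filter_eq_empty_iff, Multiset.mem_toFinset,
    not_and, not_not]
  refine ⟨fun h k hk hmem ↦ h hmem (Nat.succ_le_succ hk), fun h L hL hL2 ↦ ?_⟩
  obtain ⟨k, rfl⟩ := Nat.exists_eq_add_of_le' (one_le_two.trans hL2)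
  exact h k (Nat.le_of_succ_le_succ hL2) hL

theorem multBonus_eq_zero_iff : multBonus lam = 0 ↔ lam.parts.Nodup := by
  simp only [multBonus, Finset.card_eq_zero, Finset.filter_eq_empty_iff, Multiset.mem_toFinset,
    not_le, Multiset.nodup_iff_count_eq_one]
  refine forall₂_congr fun L hL ↦ ?_
  have hcount : 0 < lam.parts.count L := Multiset.count_pos.2 hL
  omega

theorem gapBonus_eq_zero_iff_toFinset_eq_Icc :
    gapBonus lam = 0 ↔ lam.parts.toFinset = Finset.Icc 1 (supp lam) := by
  have hpos : ∀ k ∈ lam.parts.toFinset, 1 ≤ k := fun _ hk ↦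
    lam.parts_pos (Multiset.mem_toFinset.1 hk)
  rw [gapBonus_eq_zero_iff, ← Finset.Ico_add_one_right_eq_Icc, add_comm, supp,
    eq_Ico_add_card_iff hpos]
  simp only [Multiset.mem_toFinset]

end Bonus

/-- `A(λ) = 0` and `B(λ) = 0` iff `λ` is the staircase partition `δ_r`,
where `r = supp λ`, i.e. the parts of `λ` are exactly `r, r-1, …, 1`, each once. -/
theorem bonus_zero_iff_staircase (n : ℕ) (hn : 1 ≤ n) (lam : n.Partition) :
    (gapBonus lam = 0 ∧ multBonus lam = 0) ↔
      lam.parts = (Finset.Icc 1 (supp lam)).val := by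
  rw [gapBonus_eq_zero_iff_toFinset_eq_Icc, multBonus_eq_zero_iff, eq_val_iff_toFinset_eq_and_nodup]

end PartitionDegree
end

section
/- Let s ≥ 1 and n = T_s = s(s+1)/2. Then every partition λ of n satisfies deg(λ) ≤ s(s−1), and equality holds if and only if λ is the staircase partition δ_s = (s, s−1, ..., 1). In particular Δ_n = s(s−1) and the staircase is the unique degree-maximizing partition of n. -/
/-!
Let `λ` be a partition of `T s` with `r` distinct part sizes. Each bonus is at most `r`, so
`deg λ ≤ r(r-1) + 2r = (r+1)r`. Also `T r ≤ T s`, because `T r` is the least sum of `r` distinct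
positive integers, so `r ≤ s`.

If `r = s`, then the distinct sizes already exhaust the sum `T s`, which leaves only the staircase.
If `r + 1 < s`, then `(r+1)r < s(s-1)`. If `r + 1 = s`, then `deg λ = s(s-1)` would force both
bonuses to be `r`: the size `1` does not occur and every size is repeated. The distinct sizes
together with `1` then have sum at least `T (r+1) = T s`, so `T s ≥ 2(T s - 1)`, that is `T s ≤ 2`;
this leaves `r = 0`, which is impossible since `λ` is not empty.
-/

namespace PartitionDegree

lemma sum_Icc_one (m : ℕ) : ∑ x ∈ Finset.Icc 1 m, x = T m := by
  calc ∑ x ∈ Finset.Icc 1 m, x = ∑ x ∈ Finset.range (m + 1), x := by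
        rw [Finset.range_eq_Ico, Finset.sum_eq_sum_Ico_succ_bot m.succ_pos, zero_add, zero_add]
        rfl
    _ = T m := by rw [Finset.sum_range_id, Nat.add_sub_cancel, mul_comm, T]

lemma T_strictMono : StrictMono T :=
  strictMono_nat_of_lt_succ fun m => by
    rw [← sum_Icc_one, ← sum_Icc_one, Finset.sum_Icc_succ_top (Nat.le_add_left 1 m)]
    lia

section DistinctSums

variable {S : Finset ℕ} {c : ℕ}

lemma sum_Ico_lt_sum (hS : ∀ x ∈ S, c ≤ x) (hne : S ≠ Finset.Ico c (c + S.card)) :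
    ∑ x ∈ Finset.Ico c (c + S.card), x < ∑ x ∈ S, x := by
  set I := Finset.Ico c (c + S.card)
  have hcard : I.card = S.card := by simp [I]
  have hnonempty : (I \ S).Nonempty :=
    Finset.sdiff_nonempty.2 fun h => hne (Finset.eq_of_subset_of_card_le h hcard.ge).symm
  rw [← Finset.sum_sdiff_lt_sum_sdiff]
  calc ∑ x ∈ I \ S, x < ∑ _x ∈ I \ S, (c + S.card) :=
        Finset.sum_lt_sum_of_nonempty hnonempty fun x hx =>
          (Finset.mem_Ico.1 (Finset.mem_sdiff.1 hx).1).2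
    _ = (S \ I).card • (c + S.card) := by
        rw [Finset.sum_const, Finset.card_sdiff_comm hcard]
    _ ≤ ∑ x ∈ S \ I, x := Finset.card_nsmul_le_sum _ _ _ fun x hx => by grind

lemma sum_Ico_le_sum (hS : ∀ x ∈ S, c ≤ x) :
    ∑ x ∈ Finset.Ico c (c + S.card), x ≤ ∑ x ∈ S, x := by
  by_cases h : S = Finset.Ico c (c + S.card)
  · rw [← h]
  · exact (sum_Ico_lt_sum hS h).le

end DistinctSums

section MultisetSums

variable {m : Multiset ℕ}

lemma mul_sum_toFinset_le_sum {k : ℕ} (hk : ∀ x ∈ m, k ≤ m.count x) :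
    k * ∑ x ∈ m.toFinset, x ≤ m.sum := by
  rw [Finset.sum_multiset_count, Finset.mul_sum]
  exact Finset.sum_le_sum fun x hx => Nat.mul_le_mul_right x (hk x (Multiset.mem_toFinset.1 hx))

lemma nodup_of_sum_le_sum_toFinset (hpos : ∀ x ∈ m, 0 < x)
    (hsum : m.sum ≤ ∑ x ∈ m.toFinset, x) : m.Nodup := by
  obtain ⟨u, hu⟩ := Multiset.le_iff_exists_add.1 (Multiset.dedup_le m)
  have hsplit : m.sum = ∑ x ∈ m.toFinset, x + u.sum := by
    conv_lhs => rw [hu, Multiset.sum_add, ← Multiset.toFinset_val, Finset.sum_val]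
    rfl
  have hzero : ∀ x ∈ u, x = 0 := Multiset.sum_eq_zero_iff.1 (by lia)
  have hempty : u = 0 := Multiset.eq_zero_of_forall_notMem fun x hx =>
    (hpos x (hu ▸ Multiset.mem_add.2 (Or.inr hx))).ne' (hzero x hx)
  rw [hempty, add_zero] at hu
  exact Multiset.dedup_eq_self.1 hu.symm

end MultisetSums

section Degree

variable {n : ℕ} {lam : n.Partition}

lemma one_le_of_mem_toFinset_parts {x : ℕ} (hx : x ∈ lam.parts.toFinset) : 1 ≤ x :=
  lam.parts_pos (Multiset.mem_toFinset.1 hx)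

lemma supp_pos (hn : n ≠ 0) (lam : n.Partition) : 0 < supp lam := by
  rw [supp, Finset.card_pos, Multiset.toFinset_nonempty]
  intro hparts
  exact hn (by rw [← lam.parts_sum, hparts, Multiset.sum_zero])

lemma sum_toFinset_parts_le (lam : n.Partition) : ∑ x ∈ lam.parts.toFinset, x ≤ n := by
  simpa [lam.parts_sum] using
    mul_sum_toFinset_le_sum (m := lam.parts) fun _ => Multiset.one_le_count_iff_mem.2

lemma T_supp_le_sum_toFinset_parts (lam : n.Partition) :
    T (supp lam) ≤ ∑ x ∈ lam.parts.toFinset, x := by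
  rw [← sum_Icc_one, ← Finset.Ico_add_one_right_eq_Icc, add_comm]
  exact sum_Ico_le_sum fun _ => one_le_of_mem_toFinset_parts

lemma T_supp_le (lam : n.Partition) : T (supp lam) ≤ n :=
  (T_supp_le_sum_toFinset_parts lam).trans (sum_toFinset_parts_le lam)

lemma parts_eq_Icc_of_T_supp_eq (h : T (supp lam) = n) :
    lam.parts = (Finset.Icc 1 (supp lam)).val := by
  have hnodup : lam.parts.Nodup := nodup_of_sum_le_sum_toFinset (fun _ => lam.parts_pos) <| by
    rw [lam.parts_sum]
    exact h.ge.trans (T_supp_le_sum_toFinset_parts lam)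
  have hIcc : lam.parts.toFinset = Finset.Icc 1 (supp lam) := by
    by_contra hne
    rw [← Finset.Ico_add_one_right_eq_Icc, add_comm] at hne
    have hlt := sum_Ico_lt_sum (fun _ => one_le_of_mem_toFinset_parts) hne
    rw [add_comm, Finset.Ico_add_one_right_eq_Icc, sum_Icc_one] at hlt
    exact (hlt.trans_le (sum_toFinset_parts_le lam)).ne h
  rw [← hIcc, Multiset.toFinset_val, hnodup.dedup]

lemma gapBonus_le_supp (lam : n.Partition) : gapBonus lam ≤ supp lam := Finset.card_filter_le _ _

lemma multBonus_le_supp (lam : n.Partition) : multBonus lam ≤ supp lam := Finset.card_filter_le _ _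

lemma gapBonus_eq_supp_iff :
    gapBonus lam = supp lam ↔ ∀ x ∈ lam.parts, 2 ≤ x ∧ x - 1 ∉ lam.parts := by
  simp only [gapBonus, supp, Finset.card_filter_eq_iff, Multiset.mem_toFinset]

lemma multBonus_eq_supp_iff :
    multBonus lam = supp lam ↔ ∀ x ∈ lam.parts, 2 ≤ lam.parts.count x := by
  simp only [multBonus, supp, Finset.card_filter_eq_iff, Multiset.mem_toFinset]

lemma deg_add_two_mul_supp (lam : n.Partition) :
    deg lam + 2 * supp lam = (supp lam + 1) * supp lam + gapBonus lam + multBonus lam := by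
  rw [deg]
  cases supp lam <;> grind

lemma deg_le (lam : n.Partition) : deg lam ≤ (supp lam + 1) * supp lam := by
  linarith [deg_add_two_mul_supp lam, gapBonus_le_supp lam, multBonus_le_supp lam]

lemma T_supp_add_one_le_sum_toFinset_parts_add_one (hparts : ∀ x ∈ lam.parts, 2 ≤ x) :
    T (supp lam + 1) ≤ ∑ x ∈ lam.parts.toFinset, x + 1 := by
  have hsum : ∑ x ∈ Finset.Ico 2 (2 + supp lam), x ≤ ∑ x ∈ lam.parts.toFinset, x :=
    sum_Ico_le_sum fun x hx => hparts x (Multiset.mem_toFinset.1 hx)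
  rw [← sum_Icc_one, ← Finset.Ico_add_one_right_eq_Icc,
    Finset.sum_eq_sum_Ico_succ_bot (by lia)]
  grind

lemma two_mul_T_supp_add_one_le_of_deg_eq (h : deg lam = (supp lam + 1) * supp lam) :
    2 * T (supp lam + 1) ≤ n + 2 := by
  have hdeg := deg_add_two_mul_supp lam
  have hgap_le := gapBonus_le_supp lam
  have hmult_le := multBonus_le_supp lam
  have hgap := gapBonus_eq_supp_iff.1 (show gapBonus lam = supp lam by lia)
  have hmult := multBonus_eq_supp_iff.1 (show multBonus lam = supp lam by lia)
  have hsum := T_supp_add_one_le_sum_toFinset_parts_add_one fun x hx => (hgap x hx).1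
  have hsum_le := mul_sum_toFinset_le_sum hmult
  rw [lam.parts_sum] at hsum_le
  lia

lemma deg_eq_of_parts_eq_Icc {s : ℕ} (h : lam.parts = (Finset.Icc 1 s).val) :
    deg lam = s * (s - 1) := by
  have hsupp : supp lam = s := by simp [supp, h]
  have hgap : gapBonus lam = 0 := by
    simp only [gapBonus, Finset.card_eq_zero, Finset.filter_eq_empty_iff, Multiset.mem_toFinset, h,
      Finset.mem_val, Finset.mem_Icc]
    lia
  have hmult : multBonus lam = 0 := by
    have hnodup : lam.parts.Nodup := h ▸ Finset.nodup _
    rw [multBonus, Finset.card_eq_zero, Finset.filter_eq_empty_iff]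
    exact fun x _ => (Multiset.nodup_iff_count_le_one.1 hnodup x).not_gt
  rw [deg, hsupp, hgap, hmult, add_zero, add_zero]

end Degree

section Triangular

variable {s : ℕ}

lemma supp_le (lam : (T s).Partition) : supp lam ≤ s :=
  T_strictMono.le_iff_le.1 (T_supp_le lam)

lemma deg_lt_of_supp_lt {lam : (T s).Partition} (h : supp lam < s) : deg lam < s * (s - 1) := by
  have hpos : 0 < supp lam := supp_pos (T_strictMono (Nat.zero_lt_of_lt h)).ne' lam
  rcases (Nat.succ_le_of_lt h).eq_or_lt with hs | hs
  · have hne : deg lam ≠ (supp lam + 1) * supp lam := by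
      intro hdeg
      have hT : 2 * T s ≤ T s + 2 := by
        simpa only [← hs] using two_mul_T_supp_add_one_le_of_deg_eq hdeg
      have hthree : T 2 ≤ T s := T_strictMono.monotone (by lia)
      have hT_two : T 2 = 3 := rfl
      lia
    calc deg lam < (supp lam + 1) * supp lam := (deg_le lam).lt_of_ne hne
      _ = s * (s - 1) := congrArg₂ (· * ·) hs (by lia)
  · calc deg lam ≤ (supp lam + 1) * supp lam := deg_le lam
      _ < s * (s - 1) := Nat.mul_lt_mul_of_lt_of_le hs (by lia) (by lia)

lemma parts_eq_Icc_of_supp_eq {lam : (T s).Partition} (h : supp lam = s) :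
    lam.parts = (Finset.Icc 1 s).val := by
  rw [parts_eq_Icc_of_T_supp_eq (congrArg T h), h]

end Triangular

/-- The staircase partition `δ_s`, with parts `1, …, s` each occurring once; it attains the maximal
degree `Δ_n` for `n = T s`. -/
def staircase (s : ℕ) : (T s).Partition where
  parts := (Finset.Icc 1 s).val
  parts_pos hi := (Finset.mem_Icc.1 (Finset.mem_def.2 hi)).1
  parts_sum := (Finset.sum_val _).trans (sum_Icc_one s)

/-- for `n = T s`, every partition of `n` has degree at most `s(s-1)`,
with equality exactly for the staircase `δ_s`; in particular `Δ_n = s(s-1)`. -/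
theorem triangular_max (s : ℕ) (hs : 1 ≤ s) :
    (∀ lam : (T s).Partition, deg lam ≤ s * (s - 1)) ∧
      (∀ lam : (T s).Partition,
        deg lam = s * (s - 1) ↔ lam.parts = (Finset.Icc 1 s).val) ∧
      maxDeg (T s) = s * (s - 1) := by
  have hle (lam : (T s).Partition) : deg lam ≤ s * (s - 1) := by
    rcases (supp_le lam).lt_or_eq with hlt | heq
    · exact (deg_lt_of_supp_lt hlt).le
    · exact (deg_eq_of_parts_eq_Icc (parts_eq_Icc_of_supp_eq heq)).le
  refine ⟨hle, fun lam => ⟨fun hdeg => ?_, deg_eq_of_parts_eq_Icc⟩, ?_⟩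
  · exact parts_eq_Icc_of_supp_eq <|
      (supp_le lam).eq_of_not_lt fun hlt => (deg_lt_of_supp_lt hlt).ne hdeg
  · refine (Finset.sup_le fun lam _ => hle lam).antisymm ?_
    rw [← deg_eq_of_parts_eq_Icc (lam := staircase s) rfl]
    exact Finset.le_sup (f := deg) (Finset.mem_univ (staircase s))

end PartitionDegree
end

section
/- Let s ≥ 1, let 0 ≤ q ≤ s, and set n = T_s + q. If λ is a partition of n with supp(λ) = s, then T_{A(λ)} + T_{B(λ)} ≤ q, where T_m = m(m+1)/2. -/
/-!
Let `S` be the set of part sizes, `G ⊆ S` the sizes counted by `A`, and `M ⊆ S` the repeated sizes.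
Counting every size once, and every repeated size once more, gives `n ≥ ∑ S + ∑ M`.

The sums are bounded by ranks. The map `g ↦ g - 1` sends the elements of `G` up to `x` injectively
to positive integers below `x` that are missing from `S`, so `x` is at least its rank in `S` plus
the number of elements of `G` up to `x`. The ranks in a set of size `k` add up to `T k`; summing
over `S`, and keeping only `x ∈ G` in the second term, gives `∑ S ≥ T |S| + T |G|`. Likewise
`∑ M ≥ T |M|`, whence `T |S| + T |G| + T |M| ≤ n`.
-/

namespace PartitionDegree

open Finset

lemma T_succ (m : ℕ) : T (m + 1) = T m + (m + 1) := by
  simpa only [T, Nat.add_sub_cancel, mul_comm] using Nat.triangle_succ (m + 1)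

lemma sum_card_filter_le_eq_T_card {α : Type*} [LinearOrder α] (S : Finset α) :
    ∑ x ∈ S, #{y ∈ S | y ≤ x} = T #S := by
  induction S using Finset.induction_on_max with
  | empty => simp [T]
  | insert m S lt_max ih =>
    have hm : m ∉ S := fun h ↦ (lt_max m h).false
    have rank_max : #{y ∈ insert m S | y ≤ m} = #S + 1 := by
      rw [filter_true_of_mem (by grind), card_insert_of_notMem hm]
    have rank_of_mem : ∀ x ∈ S, #{y ∈ insert m S | y ≤ x} = #{y ∈ S | y ≤ x} := fun x hx ↦ by
      rw [filter_insert, if_neg (lt_max x hx).not_ge]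
    rw [sum_insert hm, rank_max, sum_congr rfl rank_of_mem, ih, card_insert_of_notMem hm, T_succ,
      add_comm]

/-- The elements of `S` at least `2` whose predecessor is missing from `S`; on the set of part sizes
of a partition, these are the sizes counted by `gapBonus`. -/
def gaps (S : Finset ℕ) : Finset ℕ := {x ∈ S | 2 ≤ x ∧ x - 1 ∉ S}

lemma gaps_subset (S : Finset ℕ) : gaps S ⊆ S := filter_subset _ _

lemma gapBonus_eq_card_gaps {n : ℕ} (lam : n.Partition) :
    gapBonus lam = #(gaps lam.parts.toFinset) := by
  simp only [gapBonus, gaps, Multiset.mem_toFinset]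

lemma card_filter_le_add_card_gaps_filter_le {S : Finset ℕ} (hS : 0 ∉ S) (N : ℕ) :
    #{x ∈ S | x ≤ N} + #{x ∈ gaps S | x ≤ N} ≤ N := by
  have filter_subset_Icc : {x ∈ S | x ≤ N} ⊆ Icc 1 N := by grind
  have pred_mem : ∀ x ∈ {x ∈ gaps S | x ≤ N}, x - 1 ∈ Icc 1 N \ {x ∈ S | x ≤ N} := by
    grind [gaps]
  have pred_injOn : Set.InjOn (· - 1) ({x ∈ gaps S | x ≤ N} : Finset ℕ) := by
    grind [Set.InjOn, gaps]
  calc #{x ∈ S | x ≤ N} + #{x ∈ gaps S | x ≤ N}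
      ≤ #{x ∈ S | x ≤ N} + #(Icc 1 N \ {x ∈ S | x ≤ N}) := by
        gcongr 1
        exact card_le_card_of_injOn _ pred_mem pred_injOn
    _ = #(Icc 1 N) := by rw [add_comm, card_sdiff_add_card_eq_card filter_subset_Icc]
    _ = N := by rw [Nat.card_Icc, Nat.add_sub_cancel]

lemma T_card_add_T_card_gaps_le_sum {S : Finset ℕ} (hS : 0 ∉ S) :
    T #S + T #(gaps S) ≤ ∑ x ∈ S, x :=
  calc T #S + T #(gaps S)
      = ∑ x ∈ S, #{y ∈ S | y ≤ x} + ∑ x ∈ gaps S, #{y ∈ gaps S | y ≤ x} := by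
        rw [sum_card_filter_le_eq_T_card, sum_card_filter_le_eq_T_card]
    _ ≤ ∑ x ∈ S, #{y ∈ S | y ≤ x} + ∑ x ∈ S, #{y ∈ gaps S | y ≤ x} := by
        gcongr
        exact gaps_subset S
    _ = ∑ x ∈ S, (#{y ∈ S | y ≤ x} + #{y ∈ gaps S | y ≤ x}) := sum_add_distrib.symm
    _ ≤ ∑ x ∈ S, x := sum_le_sum fun x _ ↦ card_filter_le_add_card_gaps_filter_le hS x

lemma T_card_le_sum {S : Finset ℕ} (hS : 0 ∉ S) : T #S ≤ ∑ x ∈ S, x :=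
  (Nat.le_add_right _ _).trans (T_card_add_T_card_gaps_le_sum hS)

lemma toFinset_val_add_repeated_val_le {α : Type*} [DecidableEq α] (s : Multiset α) :
    s.toFinset.val + ({x ∈ s.toFinset | 2 ≤ s.count x} : Finset α).val ≤ s := by
  refine Multiset.le_iff_count.2 fun x ↦ ?_
  rw [Multiset.count_add, Multiset.count_eq_of_nodup (nodup _),
    Multiset.count_eq_of_nodup (nodup _)]
  simp only [mem_val, mem_filter, Multiset.mem_toFinset]
  grind [Multiset.one_le_count_iff_mem]

lemma sum_toFinset_add_sum_repeated_le_sum {α : Type*} [DecidableEq α] [AddCommMonoid α]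
    [PartialOrder α] [CanonicallyOrderedAdd α] (s : Multiset α) :
    ∑ x ∈ s.toFinset, x + ∑ x ∈ s.toFinset with 2 ≤ s.count x, x ≤ s.sum := by
  obtain ⟨t, ht⟩ := Multiset.le_iff_exists_add.1 (toFinset_val_add_repeated_val_le s)
  have hsum := congrArg Multiset.sum ht
  rw [Multiset.sum_add, Multiset.sum_add, sum_val, sum_val] at hsum
  exact le_iff_exists_add.2 ⟨t.sum, hsum⟩

theorem triangular_budget_general {n : ℕ} (lam : n.Partition) :
    T (supp lam) + T (gapBonus lam) + T (multBonus lam) ≤ n := by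
  have zero_notMem : 0 ∉ lam.parts.toFinset := fun h ↦
    (lam.parts_pos (Multiset.mem_toFinset.1 h)).false
  calc T (supp lam) + T (gapBonus lam) + T (multBonus lam)
      ≤ ∑ x ∈ lam.parts.toFinset, x + ∑ x ∈ lam.parts.toFinset with 2 ≤ lam.parts.count x, x := by
        rw [gapBonus_eq_card_gaps]
        exact add_le_add (T_card_add_T_card_gaps_le_sum zero_notMem)
          (T_card_le_sum fun h ↦ zero_notMem (mem_of_mem_filter 0 h))
    _ ≤ lam.parts.sum := sum_toFinset_add_sum_repeated_le_sum lam.parts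
    _ = n := lam.parts_sum

/-- triangular budget bound: if `λ ⊢ T s + q` has support size `s`,
then `T_{A(λ)} + T_{B(λ)} ≤ q`. -/
theorem triangular_budget (s q : ℕ) (hs : 1 ≤ s) (hqs : q ≤ s)
    (lam : (T s + q).Partition) (hsupp : supp lam = s) :
    T (gapBonus lam) + T (multBonus lam) ≤ q := by
  simpa only [hsupp, add_assoc, Nat.add_le_add_iff_left] using triangular_budget_general lam

end PartitionDegree
end

section
/- For every natural number q, the quantity ρ(q) := max{a + b : a, b ∈ ℕ, T_a + T_b ≤ q} satisfies ρ(q) = ⌊√(4q+1)⌋ − 1. Equivalently, ρ(q) is the largest integer c ≥ 0 such that ⌊(c+1)²/4⌋ ≤ q. -/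
namespace PartitionDegree

/-!
The identity `4 (T a + T b) + 1 = (a + b + 1)² + (a - b)²` shows that among the pairs with
`a + b = c` the sum `T a + T b` is smallest when `a` and `b` differ by at most one, and that its
minimum is `⌊(c + 1)² / 4⌋`. As squares are `0` or `1` modulo `4`, the condition
`⌊(c + 1)² / 4⌋ ≤ q` amounts to `(c + 1)² ≤ 4 q + 1`.
-/

lemma two_mul_T (m : ℕ) : 2 * T m = m * (m + 1) :=
  Nat.mul_div_cancel' (Nat.even_mul_succ_self m).two_dvd

lemma four_mul_T_add_T_add_one (a b : ℕ) :
    (4 * (T a + T b) + 1 : ℤ) = (a + b + 1) ^ 2 + (a - b) ^ 2 := by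
  have ha : (2 * T a : ℤ) = a * (a + 1) := mod_cast two_mul_T a
  have hb : (2 * T b : ℤ) = b * (b + 1) := mod_cast two_mul_T b
  linear_combination 2 * ha + 2 * hb

lemma sq_div_four_le_iff_sq_le {n q : ℕ} : n ^ 2 / 4 ≤ q ↔ n ^ 2 ≤ 4 * q + 1 := by
  have hmod : n ^ 2 % 4 = 0 ∨ n ^ 2 % 4 = 1 := by
    rcases n.even_or_odd with hn | hn
    · exact .inl (Nat.mod_eq_zero_of_dvd (pow_dvd_pow_of_dvd hn.two_dvd 2))
    · exact .inr (mod_cast Int.sq_mod_four_eq_one_of_odd (x := n) (mod_cast hn))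
  lia

lemma sq_div_four_le_T_add_T (a b : ℕ) : (a + b + 1) ^ 2 / 4 ≤ T a + T b := by
  rw [sq_div_four_le_iff_sq_le]
  zify
  rw [four_mul_T_add_T_add_one]
  exact le_add_of_nonneg_right (sq_nonneg _)

lemma T_add_T_eq_sq_div_four {a b : ℕ} (hab : a ≤ b) (hba : b ≤ a + 1) :
    T a + T b = (a + b + 1) ^ 2 / 4 := by
  refine le_antisymm ?_ (sq_div_four_le_T_add_T a b)
  have hdiff : (a - b : ℤ) ^ 2 ≤ 1 := by
    rw [sq_le_one_iff_abs_le_one, abs_le]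
    lia
  rw [Nat.le_div_iff_mul_le four_pos]
  zify
  linarith [four_mul_T_add_T_add_one a b]

lemma exists_T_add_T_le_iff {c q : ℕ} :
    (∃ a b : ℕ, c = a + b ∧ T a + T b ≤ q) ↔ (c + 1) ^ 2 / 4 ≤ q := by
  constructor
  · rintro ⟨a, b, rfl, hq⟩
    exact (sq_div_four_le_T_add_T a b).trans hq
  · intro hq
    have hc : c = c / 2 + (c + 1) / 2 := by lia
    refine ⟨c / 2, (c + 1) / 2, hc, ?_⟩
    rwa [T_add_T_eq_sq_div_four (by lia) (by lia), ← hc]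

lemma isGreatest_sqrt_sub_one (q : ℕ) :
    IsGreatest {c : ℕ | (c + 1) ^ 2 / 4 ≤ q} (Nat.sqrt (4 * q + 1) - 1) := by
  have hpos : 1 ≤ Nat.sqrt (4 * q + 1) := Nat.sqrt_pos.mpr (Nat.succ_pos _)
  have hiff (c : ℕ) : (c + 1) ^ 2 / 4 ≤ q ↔ c ≤ Nat.sqrt (4 * q + 1) - 1 := by
    rw [sq_div_four_le_iff_sq_le, ← Nat.le_sqrt', Nat.le_sub_iff_add_le hpos]
  exact ⟨(hiff _).mpr le_rfl, fun c => (hiff c).mp⟩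

/-- explicit formula `ρ(q) = ⌊√(4q+1)⌋ - 1`; equivalently, `ρ(q)` is the
largest `c` with `⌊(c+1)²/4⌋ ≤ q`. -/
theorem rho_explicit (q : ℕ) :
    rho q = Nat.sqrt (4 * q + 1) - 1 ∧
      IsGreatest {c : ℕ | (c + 1) ^ 2 / 4 ≤ q} (rho q) := by
  have hgreatest := isGreatest_sqrt_sub_one q
  have hrho : rho q = Nat.sqrt (4 * q + 1) - 1 := by
    simp only [rho, exists_T_add_T_le_iff]
    exact hgreatest.csSup_eq
  exact ⟨hrho, hrho ▸ hgreatest⟩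

end PartitionDegree
end
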